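/- Let k ≥ 1 be an integer and m, γ ∈ ℤ. The set of r in the closed interval [0, k] for which there exists a differentiable y : ℝ → ℂ with y(0) ≠ 0, y′(θ) = 2π√(−1) r y(θ) for all θ, and exp(−2π√(−1) m φ) y(θ+φ) = exp(2π√(−1) γ φ) y(θ) for all θ, φ ∈ ℝ, is equal to the singleton {m + γ} if 0 ≤ m + γ ≤ k, and is empty otherwise. -/

import Mathlib

/-! The weight condition at `θ = 0` determines a section from its value there:
`y φ = exp (2πi (m + γ) φ) y 0`. Such a section is parallel for `d - 2πi (m + γ) dθ`, and a section
that does not vanish identically is parallel for at most one of these connections. -/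

open Complex
open scoped Real

/-- Parallel sections, pulled back to `ℝ`, of the trivial line bundle over `ℝ/ℤ` with connection
`d - 2πi r dθ`. Periodicity is not imposed: for integral `m` and `γ` it follows from
`HasWeight`. -/
def IsParallelSection (r : ℝ) (y : ℝ → ℂ) : Prop :=
  Differentiable ℝ y ∧ ∀ θ : ℝ, deriv y θ = 2 * π * I * r * y θ

/-- Sections of weight `γ` for the circle action with fiber weight shift `m`, which pulls `y` back
to `θ ↦ exp (-2πi m φ) y (θ + φ)`. For non-integral `m` or `γ`, the universal cover `ℝ` of the
circle acts instead. -/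
def HasWeight (m γ : ℝ) (y : ℝ → ℂ) : Prop :=
  ∀ θ φ : ℝ, exp (-(2 * π * I * m * φ)) * y (θ + φ) = exp (2 * π * I * γ * φ) * y θ

theorem hasDerivAt_cexp_mul_ofReal (c : ℂ) (θ : ℝ) :
    HasDerivAt (fun t : ℝ ↦ exp (c * t)) (c * exp (c * θ)) θ := by
  simpa [mul_comm] using ((hasDerivAt_id θ).ofReal_comp.const_mul c).cexp

theorem hasWeight_exp (m γ : ℝ) :
    HasWeight m γ fun θ ↦ exp (2 * π * I * (m + γ : ℝ) * θ) := by
  intro θ φ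
  rw [← exp_add, ← exp_add]
  congr 1
  push_cast
  ring

section

variable {r r' m γ : ℝ} {y : ℝ → ℂ}

theorem IsParallelSection.eq_of_ne_zero {θ : ℝ} (hr : IsParallelSection r y)
    (hr' : IsParallelSection r' y) (hy : y θ ≠ 0) : r = r' := by
  have h : 2 * π * I * r * y θ = 2 * π * I * r' * y θ := (hr.2 θ).symm.trans (hr'.2 θ)
  exact ofReal_injective (mul_left_cancel₀ two_pi_I_ne_zero (mul_right_cancel₀ hy h))

theorem HasWeight.eq_exp_mul (hy : HasWeight m γ y) (θ : ℝ) :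
    y θ = exp (2 * π * I * (m + γ : ℝ) * θ) * y 0 := by
  have h := hy 0 θ
  rw [zero_add, exp_neg, inv_mul_eq_iff_eq_mul₀ (exp_ne_zero _), ← mul_assoc, ← exp_add] at h
  rw [h]
  congr 2
  push_cast
  ring

theorem HasWeight.isParallelSection (hy : HasWeight m γ y) : IsParallelSection (m + γ) y := by
  have hderiv (θ : ℝ) : HasDerivAt y (2 * π * I * (m + γ : ℝ) * y θ) θ := by
    rw [hy.eq_exp_mul θ, ← mul_assoc, funext hy.eq_exp_mul]
    simpa using (hasDerivAt_cexp_mul_ofReal (2 * π * I * (m + γ : ℝ)) θ).mul_const (y 0)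
  exact ⟨fun θ ↦ (hderiv θ).differentiableAt, fun θ ↦ (hderiv θ).deriv⟩

end

theorem exists_isParallelSection_hasWeight_iff (r m γ : ℝ) :
    (∃ y : ℝ → ℂ, IsParallelSection r y ∧ y 0 ≠ 0 ∧ HasWeight m γ y) ↔ r = m + γ := by
  constructor
  · rintro ⟨y, hpar, hy, hwt⟩
    exact hpar.eq_of_ne_zero hwt.isParallelSection hy
  · rintro rfl
    exact ⟨_, (hasWeight_exp m γ).isParallelSection, exp_ne_zero _, hasWeight_exp m γ⟩

theorem weight_orbit_unique_general (s : Set ℝ) (m γ : ℝ) [Decidable (m + γ ∈ s)] :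
    {r : ℝ | r ∈ s ∧ ∃ y : ℝ → ℂ, IsParallelSection r y ∧ y 0 ≠ 0 ∧ HasWeight m γ y}
      = if m + γ ∈ s then {m + γ} else ∅ := by
  simp only [exists_isParallelSection_hasWeight_iff]
  split_ifs with h
  · exact Set.inter_singleton_of_mem h
  · exact Set.inter_singleton_of_notMem h

/-- For an integer `k ≥ 1` and `m, γ ∈ ℤ`, the set of `r ∈ [0, k]`
admitting a differentiable `y : ℝ → ℂ` with `y 0 ≠ 0`, `y′ = 2π√(−1) r y`, and
`exp(−2π√(−1) m φ) y(θ+φ) = exp(2π√(−1) γ φ) y(θ)` for all `θ, φ`, is `{m + γ}`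
if `0 ≤ m + γ ≤ k` and is empty otherwise. -/
theorem weight_orbit_unique (k : ℕ) (hk : 1 ≤ k) (m γ : ℤ) :
    {r : ℝ | r ∈ Set.Icc (0 : ℝ) (k : ℝ) ∧
      ∃ y : ℝ → ℂ, Differentiable ℝ y ∧ y 0 ≠ 0 ∧
        (∀ θ : ℝ, deriv y θ = 2 * (Real.pi : ℂ) * Complex.I * (r : ℂ) * y θ) ∧
        (∀ θ φ : ℝ, Complex.exp (-(2 * (Real.pi : ℂ) * Complex.I * (m : ℂ) * (φ : ℂ)))
            * y (θ + φ)
          = Complex.exp (2 * (Real.pi : ℂ) * Complex.I * (γ : ℂ) * (φ : ℂ)) * y θ)}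
      = if 0 ≤ m + γ ∧ m + γ ≤ (k : ℤ) then {((m + γ : ℤ) : ℝ)} else (∅ : Set ℝ) := by
  have h := weight_orbit_unique_general (Set.Icc 0 (k : ℝ)) m γ
  simp only [IsParallelSection, HasWeight, Set.mem_Icc, and_assoc, and_left_comm] at h ⊢
  exact_mod_cast h
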